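/- arXiv:1107.0323 — 2 statements merged into one kernel-verified Lean document; each statement's English description precedes it below -/
import Mathlib

section
/- For every β ∈ (0,3], there exists a unique twice continuously differentiable strictly positive function y : [5/2,∞) → ℝ solving −y''(r) − (2/r)·y'(r) + y(r) − y(r)³ = 0 on (5/2,∞) with lim_{r→∞} r·e^{r}·y(r) = β, and this solution satisfies |y(r)/(β·e^{−r}/r + β³·g(r)) − 1| < 3.2·10⁻⁶ for all r ≥ 5/2. -/
/-!
Put `v = r e^r y`. The radial equation becomes `(e^{-2r} v')' = -e^{-4r} r⁻² v³`, and together with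
`v(∞) = β` it is equivalent to the integral equation
`v(r) = β - ∫_r^∞ ½ (e^{-2s} - e^{2r-4s}) s⁻² v(s)³ ds`, i.e. `v = β - greenOp (v³)`.

The kernel is nonnegative and very small on `[5/2,∞)`: a source bounded by `M e^{-bs}` gives a
potential of size at most `(2/25) M (1/(2+b) - 1/(4+b)) e^{-(2+b)r}` (`greenOp_bound`). With the
cube truncated to `[0,β]`, `β ≤ 3`, the right side is therefore a contraction of the bounded
continuous functions (`picard_contracting`), and its fixed point takes values in `(0,β]`, where the
truncation is inactive (`exists_isMild`, `IsMild.unique`).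

Any classical solution satisfies the integral equation (`IsClassical.isMild`): the defect `D` solves
`D'' = 2 D'`, so `D = c e^{2r} + k`, and it tends to zero. Hence uniqueness for the integral equation
gives uniqueness for the differential equation; differentiating the integral equation gives
existence (`IsMild.exists_isClassical`).

For the estimate, `greenOp 1 = -r e^r g(r)` (`greenOp_one`), so `r e^r y₃ = β - β³ greenOp 1` is the
first Picard iterate `w`. Then `v - w = greenOp (β³ - v³)`, and `0 ≤ β - v ≤ (β³/50) e^{-2r}` bounds
this by `β⁵ e^{-4r} / 2500 ≤ 1.5·10⁻⁶ β`, while `w ≥ 0.99 β` (`IsMild.approx`).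
-/

open Real Set Filter MeasureTheory

/-- `E x = ∫_x^∞ e^{-t}/t dt`, so that `Ei(-x) = -E x` for `x > 0`. -/
noncomputable def expInt (x : ℝ) : ℝ := ∫ t in Set.Ioi x, Real.exp (-t) / t

/-- `g(r) = r⁻¹ (e^{-r} E(2r) - 2 e^{r} E(4r))`. -/
noncomputable def gfun (r : ℝ) : ℝ :=
  r⁻¹ * (Real.exp (-r) * expInt (2 * r) - 2 * Real.exp r * expInt (4 * r))

/-! ### Tail integrals and the Green operator -/

/-- The tail integral `∫_r^∞ e^{-as} s⁻² q(s) ds`. -/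
noncomputable def tailInt (a : ℝ) (q : ℝ → ℝ) (r : ℝ) : ℝ :=
  ∫ s in Ioi r, rexp (-a * s) / s ^ 2 * q s

/-- The Green operator `q ↦ ∫_r^∞ ½ (e^{-2s} - e^{2r-4s}) s⁻² q(s) ds`, written as a combination
of two tail integrals in which `r` enters only through the endpoint and a factor. For bounded
continuous `q`, `w = greenOp q` solves `(e^{-2r} w')' = e^{-4r} r⁻² q` with `w(∞) = 0`. -/
noncomputable def greenOp (q : ℝ → ℝ) (r : ℝ) : ℝ :=
  tailInt 2 q r / 2 - rexp (2 * r) / 2 * tailInt 4 q r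

lemma tailInt_integrable {a : ℝ} (ha : 0 < a) {q : ℝ → ℝ} (hq : Continuous q) {C : ℝ}
    (hC : ∀ s, |q s| ≤ C) {r : ℝ} (hr : 0 < r) :
    IntegrableOn (fun s => rexp (-a * s) / s ^ 2 * q s) (Ioi r) := by
  have h1 : IntegrableOn (fun s => C / r ^ 2 * rexp (-a * s)) (Ioi r) :=
    (exp_neg_integrableOn_Ioi r ha).const_mul _
  refine Integrable.mono' h1 ?_ ?_
  · apply ContinuousOn.aestronglyMeasurable _ measurableSet_Ioi
    have : ∀ s ∈ Ioi r, s ^ 2 ≠ 0 := fun s hs => by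
      have : 0 < s := hr.trans hs
      positivity
    fun_prop (disch := assumption)
  · refine (ae_restrict_iff' measurableSet_Ioi).2 (ae_of_all _ fun s hs => ?_)
    have hs' : r < s := hs
    have hC0 : 0 ≤ C := (abs_nonneg _).trans (hC 0)
    rw [Real.norm_eq_abs, abs_mul, abs_of_nonneg (by positivity)]
    calc rexp (-a * s) / s ^ 2 * |q s| ≤ rexp (-a * s) / r ^ 2 * C := by
          gcongr
          exact hC s
      _ = _ := by ring

/-- Fundamental theorem of calculus at the lower endpoint of a tail integral. -/
lemma tailInt_hasDerivAt {a : ℝ} (ha : 0 < a) {q : ℝ → ℝ} (hq : Continuous q) {C : ℝ}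
    (hC : ∀ s, |q s| ≤ C) {r : ℝ} (hr : 0 < r) :
    HasDerivAt (tailInt a q) (-(rexp (-a * r) / r ^ 2 * q r)) r := by
  set f : ℝ → ℝ := fun s => rexp (-a * s) / s ^ 2 * q s with hf
  have hcont : ContinuousOn f (Ioi 0) := by
    have : ∀ s ∈ Ioi (0:ℝ), s ^ 2 ≠ 0 := fun s hs => by
      have : 0 < s := hs
      positivity
    fun_prop (disch := assumption)
  have hint : ∀ t : ℝ, 0 < t → IntegrableOn f (Ioi t) := fun t ht =>
    tailInt_integrable ha hq hC ht
  have hr2 : 0 < r / 2 := by positivity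
  have key : HasDerivAt (fun u => ∫ x in (r/2)..u, f x) (f r) r := by
    apply intervalIntegral.integral_hasDerivAt_right
    · rw [intervalIntegrable_iff_integrableOn_Ioc_of_le (by linarith)]
      exact (hint _ hr2).mono_set Ioc_subset_Ioi_self
    · exact hcont.stronglyMeasurableAtFilter isOpen_Ioi r hr
    · exact hcont.continuousAt (Ioi_mem_nhds hr)
  have := key.const_sub (∫ x in Ioi (r/2), f x)
  refine this.congr_of_eventuallyEq ?_
  filter_upwards [Ioi_mem_nhds hr] with t ht
  have := intervalIntegral.integral_interval_add_Ioi (hint _ hr2) (hint t ht)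
  simp only [tailInt, ← this]
  simp [hf]

lemma greenOp_hasDerivAt {q : ℝ → ℝ} (hq : Continuous q) {C : ℝ}
    (hC : ∀ s, |q s| ≤ C) {r : ℝ} (hr : 0 < r) :
    HasDerivAt (greenOp q) (-(rexp (2 * r) * tailInt 4 q r)) r := by
  have h2 := tailInt_hasDerivAt (a := 2) (by norm_num) hq hC hr
  have h4 := tailInt_hasDerivAt (a := 4) (by norm_num) hq hC hr
  have he : HasDerivAt (fun r : ℝ => rexp (2 * r)) (rexp (2 * r) * 2) r := by
    simpa using ((hasDerivAt_id r).const_mul 2).exp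
  have := (h2.div_const 2).sub ((he.div_const 2).mul h4)
  refine this.congr_deriv ?_
  have e : rexp (-2 * r) = rexp (2 * r) * rexp (-4 * r) := by
    rw [← Real.exp_add]; congr 1; ring
  rw [e]; ring

/-- The two tail integrals recombine into a single integral against a nonnegative kernel. -/
lemma greenOp_eq {q : ℝ → ℝ} (hq : Continuous q) {C : ℝ}
    (hC : ∀ s, |q s| ≤ C) {r : ℝ} (hr : 0 < r) :
    IntegrableOn (fun s => (rexp (-2 * s) - rexp (2 * r) * rexp (-4 * s)) / (2 * s ^ 2) * q s)
      (Ioi r) ∧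
    greenOp q r =
      ∫ s in Ioi r, (rexp (-2 * s) - rexp (2 * r) * rexp (-4 * s)) / (2 * s ^ 2) * q s := by
  have i2 := (tailInt_integrable (a := 2) (by norm_num) hq hC hr).div_const 2
  have i4 := (tailInt_integrable (a := 4) (by norm_num) hq hC hr).const_mul (rexp (2 * r) / 2)
  have e : ∀ s, (rexp (-2 * s) - rexp (2 * r) * rexp (-4 * s)) / (2 * s ^ 2) * q s =
      rexp (-2 * s) / s ^ 2 * q s / 2 - rexp (2 * r) / 2 * (rexp (-4 * s) / s ^ 2 * q s) := by
    intro s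
    rw [div_mul_eq_div_div]
    ring
  simp only [e]
  refine ⟨i2.sub i4, ?_⟩
  rw [integral_sub i2 i4, integral_div, integral_const_mul]
  rfl

lemma kernel_nonneg {r s : ℝ} (hs : r < s) :
    0 ≤ rexp (-2 * s) - rexp (2 * r) * rexp (-4 * s) := by
  rw [← Real.exp_add, sub_nonneg, Real.exp_le_exp]
  linarith

lemma greenOp_nonneg {q : ℝ → ℝ} (hq : Continuous q) {C : ℝ}
    (hC : ∀ s, |q s| ≤ C) (h0 : ∀ s, 0 ≤ q s) {r : ℝ} (hr : 0 < r) : 0 ≤ greenOp q r := by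
  rw [(greenOp_eq hq hC hr).2]
  refine setIntegral_nonneg measurableSet_Ioi fun s hs => ?_
  exact mul_nonneg (div_nonneg (kernel_nonneg hs) (by positivity)) (h0 s)

lemma greenOp_sub {p q : ℝ → ℝ} (hp : Continuous p) (hq : Continuous q) {C D : ℝ}
    (hC : ∀ s, |p s| ≤ C) (hD : ∀ s, |q s| ≤ D) {r : ℝ} (hr : 0 < r) :
    greenOp (fun s => p s - q s) r = greenOp p r - greenOp q r := by
  have h (a : ℝ) (ha : 0 < a) : tailInt a (fun s => p s - q s) r =
      tailInt a p r - tailInt a q r := by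
    simp only [tailInt, mul_sub]
    exact integral_sub (tailInt_integrable ha hp hC hr) (tailInt_integrable ha hq hD hr)
  simp only [greenOp, h 2 (by norm_num), h 4 (by norm_num)]
  ring

lemma greenOp_const (c r : ℝ) : greenOp (fun _ => c) r = c * greenOp (fun _ => 1) r := by
  simp only [greenOp, tailInt, mul_one, integral_mul_const]
  ring

/-- A source of size `M e^{-bs}` yields a potential of size `e^{-(2+b)r}`. The factor `2 / 25`
is `1 / (2 s²)` at the left endpoint `s = 5/2`. -/
lemma greenOp_bound {q : ℝ → ℝ} (hq : Continuous q) {C : ℝ}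
    (hC : ∀ s, |q s| ≤ C) {r : ℝ} (hr : 5 / 2 ≤ r) {M b : ℝ} (hb : 0 ≤ b)
    (hM : ∀ s, r < s → |q s| ≤ M * rexp (-b * s)) :
    |greenOp q r| ≤ 2 / 25 * M * (1 / (2 + b) - 1 / (4 + b)) * rexp (-(2 + b) * r) := by
  have hr0 : 0 < r := by linarith
  rw [(greenOp_eq hq hC hr0).2]
  have i2 := (exp_neg_integrableOn_Ioi r (b := 2 + b) (by linarith))
  have i4 := (exp_neg_integrableOn_Ioi r (b := 4 + b) (by linarith)).const_mul (rexp (2 * r))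
  have hint := (i2.sub i4).const_mul (2 / 25 * M)
  rw [← Real.norm_eq_abs]
  refine (norm_integral_le_of_norm_le hint ?_).trans (le_of_eq ?_)
  · refine (ae_restrict_iff' measurableSet_Ioi).2 (ae_of_all _ fun s hs => ?_)
    have hs' : r < s := hs
    have hk := kernel_nonneg hs'
    rw [Real.norm_eq_abs, abs_mul, abs_of_nonneg (by positivity)]
    have h1 : (rexp (-2 * s) - rexp (2 * r) * rexp (-4 * s)) / (2 * s ^ 2) ≤
        (rexp (-2 * s) - rexp (2 * r) * rexp (-4 * s)) * (2 / 25) := by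
      rw [div_eq_mul_one_div]
      refine mul_le_mul_of_nonneg_left ?_ hk
      have hs0 := hr0.trans hs'
      rw [div_le_div_iff₀ (by positivity) (by norm_num)]
      nlinarith
    calc _ ≤ (rexp (-2 * s) - rexp (2 * r) * rexp (-4 * s)) * (2 / 25) *
          (M * rexp (-b * s)) := by
          apply mul_le_mul h1 (hM s hs') (abs_nonneg _) (by positivity)
      _ = 2 / 25 * M * (rexp (-(2 + b) * s) - rexp (2 * r) * rexp (-(4 + b) * s)) := by
          have e1 : rexp (-(2 + b) * s) = rexp (-2 * s) * rexp (-b * s) := by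
            rw [← Real.exp_add]; congr 1; ring
          have e2 : rexp (-(4 + b) * s) = rexp (-4 * s) * rexp (-b * s) := by
            rw [← Real.exp_add]; congr 1; ring
          rw [e1, e2]; ring
  · rw [integral_const_mul]
    simp only [Pi.sub_apply]
    rw [integral_sub i2 i4, integral_const_mul,
      integral_exp_mul_Ioi (by linarith), integral_exp_mul_Ioi (by linarith)]
    have e : rexp (-(2 + b) * r) = rexp (2 * r) * rexp (-(4 + b) * r) := by
      rw [← Real.exp_add]; congr 1; ring
    rw [e]
    have : 2 + b ≠ 0 := by linarith
    have : 4 + b ≠ 0 := by linarith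
    simp only [neg_div_neg_eq]
    ring

lemma greenOp_bound_zero {q : ℝ → ℝ} (hq : Continuous q) {C : ℝ}
    (hC : ∀ s, |q s| ≤ C) {r : ℝ} (hr : 5 / 2 ≤ r) :
    |greenOp q r| ≤ C / 50 * rexp (-2 * r) := by
  have := greenOp_bound hq hC hr (b := 0) (M := C) le_rfl (fun s _ => by simpa using hC s)
  refine this.trans (le_of_eq ?_)
  norm_num
  ring

lemma greenOp_tendsto {q : ℝ → ℝ} (hq : Continuous q) {C : ℝ}
    (hC : ∀ s, |q s| ≤ C) : Tendsto (greenOp q) atTop (nhds 0) := by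
  have h : Tendsto (fun r : ℝ => C / 50 * rexp (-2 * r)) atTop (nhds 0) := by
    have : Tendsto (fun r : ℝ => rexp (-2 * r)) atTop (nhds 0) :=
      Real.tendsto_exp_atBot.comp (tendsto_id.const_mul_atTop_of_neg (by norm_num))
    simpa using this.const_mul (C / 50)
  refine squeeze_zero_norm' ?_ h
  filter_upwards [eventually_ge_atTop (5 / 2 : ℝ)] with r hr
  exact greenOp_bound_zero hq hC hr

/-- Integration by parts expresses `∫_r^∞ e^{-as} s⁻² ds` through the exponential integral. -/
lemma tailInt_one {a : ℝ} (ha : 0 < a) {r : ℝ} (hr : 0 < r) :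
    tailInt a (fun _ => 1) r = rexp (-a * r) / r - a * expInt (a * r) := by
  have hE : expInt (a * r) = ∫ s in Ioi r, rexp (-a * s) / s := by
    rw [expInt, ← integral_comp_mul_left_Ioi' _ _ ha, smul_eq_mul, ← integral_const_mul]
    refine setIntegral_congr_fun measurableSet_Ioi fun s hs => ?_
    have : r < s := hs
    have : s ≠ 0 := by linarith
    field_simp
  have i1 := tailInt_integrable ha (q := fun _ => 1) continuous_const (C := 1) (by simp) hr
  have i2 : IntegrableOn (fun s => rexp (-a * s) / s) (Ioi r) := by
    have h1 : IntegrableOn (fun s => 1 / r * rexp (-a * s)) (Ioi r) :=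
      (exp_neg_integrableOn_Ioi r ha).const_mul _
    refine Integrable.mono' h1 ?_ ?_
    · apply ContinuousOn.aestronglyMeasurable _ measurableSet_Ioi
      have : ∀ s ∈ Ioi r, s ≠ 0 := fun s hs => by
        have : r < s := hs
        linarith
      fun_prop (disch := assumption)
    · refine (ae_restrict_iff' measurableSet_Ioi).2 (ae_of_all _ fun s hs => ?_)
      have hs' : r < s := hs
      rw [Real.norm_eq_abs, abs_of_nonneg (by have := hr.trans hs'; positivity)]
      calc rexp (-a * s) / s ≤ rexp (-a * s) / r := by gcongr
        _ = _ := by ring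
  have key := integral_Ioi_of_hasDerivAt_of_tendsto' (a := r) (m := 0)
    (f := fun s => -(rexp (-a * s) / s))
    (f' := fun s => rexp (-a * s) / s ^ 2 * 1 + a * (rexp (-a * s) / s)) ?_
    (i1.add (i2.const_mul a)) ?_
  · rw [integral_add i1 (i2.const_mul a), integral_const_mul, ← hE] at key
    simp only [tailInt]
    linarith
  · intro s hs
    have hs' : r ≤ s := hs
    have hs0 : s ≠ 0 := by linarith
    have he : HasDerivAt (fun r : ℝ => rexp (-a * r)) (rexp (-a * s) * (-a)) s := by
      simpa using ((hasDerivAt_id s).const_mul (-a)).exp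
    refine ((he.div (hasDerivAt_id s) hs0).neg).congr_deriv ?_
    simp only [id]
    field_simp
    ring
  · have h1 : Tendsto (fun r : ℝ => rexp (-a * r)) atTop (nhds 0) :=
      Real.tendsto_exp_atBot.comp (tendsto_id.const_mul_atTop_of_neg (by linarith))
    simpa using (h1.div_atTop tendsto_id).neg

/-- The closed form of the first Picard correction: `greenOp 1 = -r e^r g(r)`. -/
lemma greenOp_one {r : ℝ} (hr : 0 < r) :
    greenOp (fun _ => 1) r = -(r * rexp r * gfun r) := by
  rw [greenOp, tailInt_one (by norm_num) hr, tailInt_one (by norm_num) hr, gfun]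
  have e1 : rexp (2 * r) = rexp r * rexp r := by rw [← Real.exp_add]; congr 1; ring
  have e2 : rexp (-2 * r) = rexp (2 * r) * rexp (-4 * r) := by
    rw [← Real.exp_add]; congr 1; ring
  have e3 : rexp r * rexp (-r) = 1 := by rw [← Real.exp_add]; simp
  have : r * rexp r * (r⁻¹ * (rexp (-r) * expInt (2 * r) - 2 * rexp r * expInt (4 * r))) =
      (r * r⁻¹) * ((rexp r * rexp (-r)) * expInt (2 * r) - 2 * (rexp r * rexp r) *
      expInt (4 * r)) := by ring
  rw [this, e3, e2, ← e1, mul_inv_cancel₀ hr.ne']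
  ring

/-! ### The integral equation -/

/-- The cubic nonlinearity truncated to `[0,β]`, which makes it bounded and globally Lipschitz. -/
noncomputable def cutCube (β x : ℝ) : ℝ := (max 0 (min x β)) ^ 3

lemma cutCube_continuous (β : ℝ) : Continuous (cutCube β) := by
  unfold cutCube
  fun_prop

lemma cutCube_nonneg (β x : ℝ) : 0 ≤ cutCube β x := by
  unfold cutCube
  positivity

lemma cutCube_abs_le {β : ℝ} (hβ : 0 ≤ β) (x : ℝ) : |cutCube β x| ≤ β ^ 3 := by
  rw [abs_of_nonneg (cutCube_nonneg β x)]
  unfold cutCube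
  gcongr
  exact max_le hβ (min_le_right _ _)

lemma cutCube_eq {β x : ℝ} (h0 : 0 ≤ x) (h1 : x ≤ β) : cutCube β x = x ^ 3 := by
  rw [cutCube, min_eq_left h1, max_eq_right h0]

lemma abs_cube_sub_le {β a b : ℝ} (ha : 0 ≤ a) (ha' : a ≤ β) (hb : 0 ≤ b) (hb' : b ≤ β) :
    |a ^ 3 - b ^ 3| ≤ 3 * β ^ 2 * |a - b| := by
  have : a ^ 3 - b ^ 3 = (a ^ 2 + a * b + b ^ 2) * (a - b) := by ring
  rw [this, abs_mul, abs_of_nonneg (by positivity)]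
  gcongr
  nlinarith

lemma cutCube_lipschitz {β : ℝ} (hβ : 0 ≤ β) (x y : ℝ) :
    |cutCube β x - cutCube β y| ≤ 3 * β ^ 2 * |x - y| := by
  unfold cutCube
  refine (abs_cube_sub_le (β := β) (le_max_left _ _) (max_le hβ (min_le_right _ _))
    (le_max_left _ _) (max_le hβ (min_le_right _ _))).trans ?_
  refine mul_le_mul_of_nonneg_left ?_ (by positivity)
  have h1 := abs_max_sub_max_le_max 0 (min x β) 0 (min y β)
  have h2 := abs_min_sub_min_le_max x β y β
  simp only [sub_self, abs_zero, abs_nonneg, sup_of_le_left, sup_of_le_right] at h1 h2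
  exact h1.trans h2

/-- The integral equation `v(r) = β - ∫_r^∞ ½ (e^{-2s} - e^{2r-4s}) s⁻² v(s)³ ds` on `[5/2,∞)`
for `v = r e^r y`, with values in `(0,β]`; functions are extended to `ℝ` by their value at `5/2`. -/
structure IsMild (β : ℝ) (v : ℝ → ℝ) : Prop where
  cont : Continuous v
  pos : ∀ r, 0 < v r
  le : ∀ r, v r ≤ β
  eq : ∀ r, v r = β - greenOp (fun s => v s ^ 3) (max r (5 / 2))

lemma exp_neg_five_lt : rexp (-5) < 0.0068 := by
  have h := Real.exp_neg_one_lt_d9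
  have : rexp (-5) = rexp (-1) ^ 5 := by rw [← Real.exp_nat_mul]; norm_num
  rw [this]
  calc rexp (-1) ^ 5 < 0.3678794412 ^ 5 := by gcongr
    _ < _ := by norm_num

lemma exp_neg_two_mul_lt {r : ℝ} (hr : 5 / 2 ≤ r) : rexp (-2 * r) < 0.0068 :=
  (Real.exp_le_exp.2 (by linarith)).trans_lt exp_neg_five_lt

/-- Picard's map for the truncated integral equation. -/
noncomputable def picard (β : ℝ) (hβ : 0 ≤ β) (v : BoundedContinuousFunction ℝ ℝ) :
    BoundedContinuousFunction ℝ ℝ :=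
  BoundedContinuousFunction.ofNormedAddCommGroup
    (fun r => β - greenOp (fun s => cutCube β (v s)) (max r (5 / 2)))
    (by
      have hq : Continuous fun s => cutCube β (v s) := (cutCube_continuous β).comp v.continuous
      refine continuous_const.sub (continuous_iff_continuousAt.2 fun r => ?_)
      have hr : (0:ℝ) < max r (5 / 2) := lt_max_of_lt_right (by norm_num)
      exact (greenOp_hasDerivAt hq (fun s => cutCube_abs_le hβ _) hr).continuousAt.comp
        (f := fun r : ℝ => max r (5 / 2)) (by fun_prop))
    (β + β ^ 3)
    (by
      intro r
      have hq : Continuous fun s => cutCube β (v s) := (cutCube_continuous β).comp v.continuous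
      have hr : (5 / 2 : ℝ) ≤ max r (5 / 2) := le_max_right _ _
      have h := greenOp_bound_zero hq (fun s => cutCube_abs_le hβ _) hr
      have he := exp_neg_two_mul_lt hr
      have hβ3 : 0 ≤ β ^ 3 := by positivity
      have := (norm_sub_le β (greenOp (fun s => cutCube β (v s)) (max r (5 / 2))))
      simp only [Real.norm_eq_abs, abs_of_nonneg hβ] at this ⊢
      nlinarith)

lemma picard_apply (β : ℝ) (hβ : 0 ≤ β) (v : BoundedContinuousFunction ℝ ℝ) (r : ℝ) :
    picard β hβ v r = β - greenOp (fun s => cutCube β (v s)) (max r (5 / 2)) := rfl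

lemma picard_contracting {β : ℝ} (hβ : 0 ≤ β) (hβ3 : β ≤ 3) :
    ContractingWith (1 / 2) (picard β hβ) := by
  refine ⟨by rw [← NNReal.coe_lt_coe]; norm_num, LipschitzWith.of_dist_le_mul fun u v => ?_⟩
  refine (BoundedContinuousFunction.dist_le (by positivity)).2 fun r => ?_
  have hu : Continuous fun s => cutCube β (u s) := (cutCube_continuous β).comp u.continuous
  have hv : Continuous fun s => cutCube β (v s) := (cutCube_continuous β).comp v.continuous
  have hr : (5 / 2 : ℝ) ≤ max r (5 / 2) := le_max_right _ _
  have hb : ∀ s, |cutCube β (v s) - cutCube β (u s)| ≤ 3 * β ^ 2 * dist u v := fun s => by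
    refine (cutCube_lipschitz hβ _ _).trans ?_
    gcongr
    rw [← Real.dist_eq, dist_comm]
    exact BoundedContinuousFunction.dist_coe_le_dist s
  rw [picard_apply, picard_apply, Real.dist_eq, sub_sub_sub_cancel_left,
    ← greenOp_sub hv hu (fun s => cutCube_abs_le hβ _) (fun s => cutCube_abs_le hβ _)
      (by linarith)]
  refine (greenOp_bound_zero (hv.sub hu) hb hr).trans ?_
  have he := exp_neg_two_mul_lt hr
  have hd : 0 ≤ dist u v := dist_nonneg
  calc 3 * β ^ 2 * dist u v / 50 * rexp (-2 * max r (5 / 2))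
      ≤ 3 * 3 ^ 2 * dist u v / 50 * 0.0068 := by gcongr
    _ ≤ ((1 / 2 : NNReal) : ℝ) * dist u v := by push_cast; linarith

/-- For nonnegative sources bounded by `β³`, the image `β - greenOp q` stays within 1 % of `β`. -/
lemma sub_greenOp_mem {β : ℝ} (hβ : 0 < β) (hβ3 : β ≤ 3) {q : ℝ → ℝ} (hq : Continuous q)
    (h0 : ∀ s, 0 ≤ q s) (hC : ∀ s, |q s| ≤ β ^ 3) {r : ℝ} (hr : 5 / 2 ≤ r) :
    0.99 * β ≤ β - greenOp q r ∧ β - greenOp q r ≤ β := by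
  have h1 := greenOp_nonneg hq hC h0 (r := r) (by linarith)
  have h2 := (le_abs_self _).trans (greenOp_bound_zero hq hC hr)
  have he := exp_neg_two_mul_lt hr
  have h3 : β ^ 3 / 50 * rexp (-2 * r) ≤ 0.01 * β := by
    calc β ^ 3 / 50 * rexp (-2 * r) = β * β ^ 2 / 50 * rexp (-2 * r) := by ring
      _ ≤ β * 3 ^ 2 / 50 * 0.0068 := by gcongr
      _ ≤ _ := by linarith
  constructor <;> linarith

lemma exists_isMild {β : ℝ} (hβ : 0 < β) (hβ3 : β ≤ 3) : ∃ v, IsMild β v := by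
  obtain ⟨v, hv⟩ : ∃ v, picard β hβ.le v = v :=
    ⟨_, (picard_contracting hβ.le hβ3).fixedPoint_isFixedPt⟩
  have hq : Continuous fun s => cutCube β (v s) := (cutCube_continuous β).comp v.continuous
  have heq : ∀ r, v r = β - greenOp (fun s => cutCube β (v s)) (max r (5 / 2)) := fun r => by
    rw [← picard_apply β hβ.le, hv]
  have hm := fun r => sub_greenOp_mem hβ hβ3 hq (fun s => cutCube_nonneg _ _)
    (fun s => cutCube_abs_le hβ.le _) (le_max_right r (5 / 2))
  have hpos : ∀ r, 0 < v r := fun r => by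
    rw [heq r]
    linarith [(hm r).1]
  have hle : ∀ r, v r ≤ β := fun r => (heq r).trans_le (hm r).2
  refine ⟨v, v.continuous, hpos, hle, fun r => ?_⟩
  have : (fun s => cutCube β (v s)) = fun s => v s ^ 3 :=
    funext fun s => cutCube_eq (hpos s).le (hle s)
  rw [← this]
  exact heq r

lemma IsMild.unique {β : ℝ} (hβ : 0 < β) (hβ3 : β ≤ 3) {u v : ℝ → ℝ} (hu : IsMild β u)
    (hv : IsMild β v) : u = v := by
  have fix : ∀ w, IsMild β w → ∃ W : BoundedContinuousFunction ℝ ℝ,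
      (W : ℝ → ℝ) = w ∧ picard β hβ.le W = W := fun w hw => by
    refine ⟨BoundedContinuousFunction.ofNormedAddCommGroup w hw.cont β fun r => ?_, rfl, ?_⟩
    · rw [Real.norm_eq_abs, abs_of_pos (hw.pos r)]
      exact hw.le r
    · ext r
      rw [picard_apply]
      have : (fun s => cutCube β (w s)) = fun s => w s ^ 3 :=
        funext fun s => cutCube_eq (hw.pos s).le (hw.le s)
      simp only [BoundedContinuousFunction.coe_ofNormedAddCommGroup, this]
      exact (hw.eq r).symm
  obtain ⟨U, rfl, hU⟩ := fix u hu
  obtain ⟨V, rfl, hV⟩ := fix v hv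
  rw [(picard_contracting hβ.le hβ3).fixedPoint_unique' hU hV]

lemma IsMild.cube_abs_le {β : ℝ} {v : ℝ → ℝ} (h : IsMild β v) (s : ℝ) : |v s ^ 3| ≤ β ^ 3 := by
  have := (h.pos s).le
  rw [abs_of_nonneg (by positivity)]
  gcongr
  exact h.le s

/-- The distance of a mild solution to the first Picard iterate `β - β³ greenOp 1`. -/
lemma IsMild.approx {β : ℝ} (hβ : 0 < β) (hβ3 : β ≤ 3) {v : ℝ → ℝ} (h : IsMild β v) {r : ℝ}
    (hr : 5 / 2 ≤ r) :
    0.99 * β ≤ β - β ^ 3 * greenOp (fun _ => 1) r ∧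
    |v r - (β - β ^ 3 * greenOp (fun _ => 1) r)| ≤ β * 1.5e-6 := by
  have hr0 : 0 < r := by linarith
  have hq : Continuous fun s => v s ^ 3 := h.cont.pow 3
  have hc : ∀ s : ℝ, |(fun _ : ℝ => β ^ 3) s| ≤ β ^ 3 := fun s => by
    rw [abs_of_nonneg (by positivity)]
  have hd : ∀ s, 5 / 2 ≤ s → |v s - β| ≤ β ^ 3 / 50 * rexp (-2 * s) := fun s hs => by
    rw [h.eq s, max_eq_left hs, sub_sub_cancel_left, abs_neg]
    exact greenOp_bound_zero hq h.cube_abs_le hs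
  rw [← greenOp_const]
  refine ⟨(sub_greenOp_mem hβ hβ3 continuous_const (fun _ => by positivity) hc hr).1, ?_⟩
  have e : v r - (β - greenOp (fun _ => β ^ 3) r) =
      greenOp (fun s => β ^ 3 - v s ^ 3) r := by
    rw [greenOp_sub continuous_const hq hc h.cube_abs_le hr0]
    conv_lhs => rw [h.eq r, max_eq_left hr]
    ring
  rw [e]
  have hM : ∀ s, r < s → |β ^ 3 - v s ^ 3| ≤ 3 * β ^ 5 / 50 * rexp (-2 * s) := fun s hs => by
    refine (abs_cube_sub_le hβ.le le_rfl (h.pos s).le (h.le s)).trans ?_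
    rw [abs_sub_comm]
    calc 3 * β ^ 2 * |v s - β| ≤ 3 * β ^ 2 * (β ^ 3 / 50 * rexp (-2 * s)) := by
          gcongr
          exact hd s (by linarith)
      _ = _ := by ring
  have hC : ∀ s, |β ^ 3 - v s ^ 3| ≤ β ^ 3 + β ^ 3 := fun s =>
    (abs_sub _ _).trans (add_le_add (hc s) (h.cube_abs_le s))
  refine (greenOp_bound (continuous_const.sub hq) hC hr (b := 2) (by norm_num) hM).trans ?_
  have he := exp_neg_two_mul_lt hr
  have e4 : rexp (-(2 + 2) * r) = rexp (-2 * r) ^ 2 := by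
    rw [← Real.exp_nat_mul]; congr 1; push_cast; ring
  rw [e4]
  calc 2 / 25 * (3 * β ^ 5 / 50) * (1 / (2 + 2) - 1 / (4 + 2)) * rexp (-2 * r) ^ 2
      = β * (β ^ 4 * rexp (-2 * r) ^ 2 / 2500) := by ring
    _ ≤ β * (3 ^ 4 * 0.0068 ^ 2 / 2500) := by gcongr
    _ ≤ _ := by gcongr; norm_num

/-! ### Equivalence with the differential equation -/

/-- The homogeneous equation `D'' = 2 D'` has only the solutions `c e^{2r} + k`, so a solution
vanishing at infinity is zero. -/
lemma eq_zero_of_homogeneous {a : ℝ} {D D1 : ℝ → ℝ}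
    (h0 : ∀ r ∈ Ioi a, HasDerivAt D (D1 r) r)
    (h1 : ∀ r ∈ Ioi a, HasDerivAt D1 (2 * D1 r) r)
    (hlim : Tendsto D atTop (nhds 0)) : ∀ r ∈ Ioi a, D r = 0 := by
  have hconst : ∀ f : ℝ → ℝ, (∀ r ∈ Ioi a, HasDerivAt f 0 r) → ∃ c, ∀ r ∈ Ioi a, f r = c :=
    fun f hf => isOpen_Ioi.exists_is_const_of_deriv_eq_zero isPreconnected_Ioi
      (fun r hr => (hf r hr).differentiableAt.differentiableWithinAt) fun r hr => (hf r hr).deriv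
  obtain ⟨k, hk⟩ := hconst (fun r => D1 r - 2 * D r) fun r hr =>
    ((h1 r hr).sub ((h0 r hr).const_mul 2)).congr_deriv (by ring)
  have hexp : ∀ r : ℝ, HasDerivAt (fun r : ℝ => rexp (-2 * r)) (rexp (-2 * r) * (-2)) r :=
    fun r => by simpa using ((hasDerivAt_id r).const_mul (-2)).exp
  obtain ⟨c, hc⟩ := hconst (fun r => (D r + k / 2) * rexp (-2 * r)) fun r hr => by
    refine (((h0 r hr).add_const (k / 2)).mul (hexp r)).congr_deriv ?_
    rw [← hk r hr]
    ring
  have he : Tendsto (fun r : ℝ => rexp (-2 * r)) atTop (nhds 0) :=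
    Real.tendsto_exp_atBot.comp (tendsto_id.const_mul_atTop_of_neg (by norm_num))
  have hc0 : c = 0 := by
    have := (hlim.add_const (k / 2)).mul he
    rw [mul_zero] at this
    refine tendsto_nhds_unique (tendsto_const_nhds.congr' ?_) this
    filter_upwards [eventually_gt_atTop a] with r hr
    exact (hc r hr).symm
  have hD : ∀ r ∈ Ioi a, D r = -(k / 2) := fun r hr => by
    have := hc r hr
    rw [hc0] at this
    have := (mul_eq_zero.1 this).resolve_right (Real.exp_pos _).ne'
    linarith
  have hk0 : -(k / 2) = 0 := by
    refine tendsto_nhds_unique (tendsto_const_nhds.congr' ?_) hlim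
    filter_upwards [eventually_gt_atTop a] with r hr
    exact (hD r hr).symm
  intro r hr
  rw [hD r hr, hk0]

lemma exp_tailInt_hasDerivAt {q : ℝ → ℝ} (hq : Continuous q) {C : ℝ}
    (hC : ∀ s, |q s| ≤ C) {r : ℝ} (hr : 0 < r) :
    HasDerivAt (fun r => rexp (2 * r) * tailInt 4 q r)
      (2 * (rexp (2 * r) * tailInt 4 q r) - rexp (-2 * r) / r ^ 2 * q r) r := by
  have h4 := tailInt_hasDerivAt (a := 4) (by norm_num) hq hC hr
  have he : HasDerivAt (fun r : ℝ => rexp (2 * r)) (rexp (2 * r) * 2) r := by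
    simpa using ((hasDerivAt_id r).const_mul 2).exp
  refine (he.mul h4).congr_deriv ?_
  have e : rexp (-2 * r) = rexp (2 * r) * rexp (-4 * r) := by
    rw [← Real.exp_add]; congr 1; ring
  rw [e]; ring

/-- The classical formulation: a positive `C²` solution on `[5/2,∞)` with
`r e^r y(r) → β`. -/
def IsClassical (β : ℝ) (y : ℝ → ℝ) : Prop :=
  ContDiffOn ℝ 2 y (Set.Ici (5 / 2)) ∧
    (∀ r ∈ Set.Ici ((5:ℝ) / 2), 0 < y r) ∧
    (∀ r > (5:ℝ) / 2,
      -(deriv (deriv y) r) - (2 / r) * deriv y r + y r - (y r) ^ 3 = 0) ∧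
    Filter.Tendsto (fun r => r * Real.exp r * y r) Filter.atTop (nhds β)

/-- Passing to `f = r e^r y` turns the radial equation into `f'' = 2 f' - e^{-2r} r⁻² f³`. -/
lemma IsClassical.transformed {β : ℝ} {y : ℝ → ℝ} (h : IsClassical β y) :
    ∃ f1 : ℝ → ℝ, ∀ r ∈ Ioi (5 / 2 : ℝ),
      HasDerivAt (fun r => r * rexp r * y r) (f1 r) r ∧
      HasDerivAt f1 (2 * f1 r - rexp (-2 * r) / r ^ 2 * (r * rexp r * y r) ^ 3) r := by
  obtain ⟨hC, -, hode, -⟩ := h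
  refine ⟨fun r => (1 + r) * rexp r * y r + r * rexp r * deriv y r, fun r hr => ?_⟩
  have hr' : 5 / 2 < r := hr
  have hO : ContDiffOn ℝ (1 + 1) y (Ioi (5 / 2)) := by
    rw [one_add_one_eq_two]
    exact hC.mono Ioi_subset_Ici_self
  rw [contDiffOn_succ_iff_deriv_of_isOpen isOpen_Ioi] at hO
  have d0 : HasDerivAt y (deriv y r) r :=
    (hO.1.differentiableAt (Ioi_mem_nhds hr')).hasDerivAt
  have d1 : HasDerivAt (deriv y) (deriv (deriv y) r) r :=
    ((hO.2.2.differentiableOn one_ne_zero).differentiableAt (Ioi_mem_nhds hr')).hasDerivAt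
  have de := Real.hasDerivAt_exp r
  have di := hasDerivAt_id r
  constructor
  · refine ((di.mul de).mul d0).congr_deriv ?_
    simp only [id, Pi.mul_apply]
    ring
  · refine ((((di.const_add 1).mul de).mul d0).add ((di.mul de).mul d1)).congr_deriv ?_
    have h2 : deriv (deriv y) r = -(2 / r) * deriv y r + y r - y r ^ 3 := by
      linarith [hode r hr']
    have e : rexp (-2 * r) = (rexp r ^ 2)⁻¹ := by
      rw [← Real.exp_nat_mul, ← Real.exp_neg]; congr 1; push_cast; ring
    have hr0 : r ≠ 0 := by linarith
    rw [h2, e]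
    simp only [id, Pi.mul_apply]
    have := (Real.exp_pos r).ne'
    field_simp
    ring

/-- Every classical solution is mild: the defect in the integral equation solves the homogeneous
equation and vanishes at infinity. -/
lemma IsClassical.isMild {β : ℝ} {y : ℝ → ℝ} (h : IsClassical β y) :
    IsMild β (fun r => max r (5 / 2) * rexp (max r (5 / 2)) * y (max r (5 / 2))) := by
  obtain ⟨f1, hf1⟩ := h.transformed
  obtain ⟨hC, hpos, -, hlim⟩ := h
  set f : ℝ → ℝ := fun r => r * rexp r * y r with hf
  set V : ℝ → ℝ := fun r => f (max r (5 / 2)) with hV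
  have hVf : ∀ r, 5 / 2 ≤ r → V r = f r := fun r hr => by rw [hV]; simp only [max_eq_left hr]
  have hfc : ContinuousOn f (Ici (5 / 2)) := by
    have := hC.continuousOn
    fun_prop
  have hVc : Continuous V := by
    refine hfc.comp_continuous (f := fun r : ℝ => max r (5 / 2)) (by fun_prop) fun r => ?_
    exact mem_Ici.2 (le_max_right _ _)
  have hVpos : ∀ r, 0 < V r := fun r => by
    have h1 : (5 / 2 : ℝ) ≤ max r (5 / 2) := le_max_right _ _
    exact mul_pos (mul_pos (by linarith) (Real.exp_pos _)) (hpos _ h1)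
  obtain ⟨C, hVC⟩ : ∃ C, ∀ r, V r ≤ C := by
    obtain ⟨R, hR⟩ := eventually_atTop.1 (hlim.eventually (Iio_mem_nhds (lt_add_one β)))
    obtain ⟨M, hM⟩ := (isCompact_Icc (a := (5 / 2 : ℝ)) (b := R)).bddAbove_image
      (f := f) (hfc.mono Icc_subset_Ici_self)
    refine ⟨max (β + 1) M, fun r => ?_⟩
    have h1 : (5 / 2 : ℝ) ≤ max r (5 / 2) := le_max_right _ _
    rcases le_total R (max r (5 / 2)) with h2 | h2
    · exact le_max_of_le_left (hR _ h2).le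
    · exact le_max_of_le_right (hM ⟨_, ⟨h1, h2⟩, rfl⟩)
  have hq : Continuous fun s => V s ^ 3 := hVc.pow 3
  have hqC : ∀ s, |V s ^ 3| ≤ C ^ 3 := fun s => by
    have := (hVpos s).le
    rw [abs_of_nonneg (by positivity)]
    gcongr
    exact hVC s
  have hD : ∀ r ∈ Ioi (5 / 2 : ℝ), f r - (β - greenOp (fun s => V s ^ 3) r) = 0 := by
    refine eq_zero_of_homogeneous
      (D1 := fun r => f1 r - rexp (2 * r) * tailInt 4 (fun s => V s ^ 3) r)
      (fun r hr => ?_) (fun r hr => ?_) ?_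
    · have hr0 : (0:ℝ) < r := lt_trans (by norm_num) hr
      refine ((hf1 r hr).1.sub ((greenOp_hasDerivAt hq hqC hr0).const_sub β)).congr_deriv ?_
      ring
    · have hr0 : (0:ℝ) < r := lt_trans (by norm_num) hr
      refine ((hf1 r hr).2.sub (exp_tailInt_hasDerivAt hq hqC hr0)).congr_deriv ?_
      have : r * rexp r * y r = V r := (hVf r (le_of_lt hr)).symm
      rw [this]
      ring
    · have := hlim.sub ((greenOp_tendsto hq hqC).const_sub β)
      simpa using this
  have heq : ∀ r ∈ Ici (5 / 2 : ℝ), f r = β - greenOp (fun s => V s ^ 3) r := by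
    have hg : ContinuousOn (fun r => β - greenOp (fun s => V s ^ 3) r) (Ici (5 / 2)) :=
      fun r hr => by
        have hr0 : (0:ℝ) < r := lt_of_lt_of_le (by norm_num) hr
        exact ((greenOp_hasDerivAt hq hqC hr0).const_sub β).continuousAt.continuousWithinAt
    have he : EqOn f (fun r => β - greenOp (fun s => V s ^ 3) r) (Ioi (5 / 2)) :=
      fun r hr => sub_eq_zero.1 (hD r hr)
    exact he.of_subset_closure hfc hg Ioi_subset_Ici_self (closure_Ioi _).ge
  have heqV : ∀ r, V r = β - greenOp (fun s => V s ^ 3) (max r (5 / 2)) :=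
    fun r => heq _ (mem_Ici.2 (le_max_right _ _))
  refine ⟨hVc, hVpos, fun r => ?_, heqV⟩
  have h1 : (0 : ℝ) < max r (5 / 2) := lt_max_of_lt_right (by norm_num)
  have := greenOp_nonneg hq hqC (fun s => pow_nonneg (hVpos s).le 3) h1
  change V r ≤ β
  rw [heqV r]
  linarith

lemma contDiffOn_two {f f1 f2 : ℝ → ℝ} {s : Set ℝ} (hs : IsOpen s)
    (h0 : ∀ r ∈ s, HasDerivAt f (f1 r) r) (h1 : ∀ r ∈ s, HasDerivAt f1 (f2 r) r)
    (h2 : ContinuousOn f2 s) : ContDiffOn ℝ 2 f s := by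
  have c1 : ContDiffOn ℝ (0 + 1) f1 s := by
    rw [contDiffOn_succ_iff_deriv_of_isOpen hs]
    refine ⟨fun r hr => (h1 r hr).differentiableAt.differentiableWithinAt, by simp, ?_⟩
    rw [contDiffOn_zero]
    exact h2.congr fun r hr => (h1 r hr).deriv
  rw [← one_add_one_eq_two, contDiffOn_succ_iff_deriv_of_isOpen hs]
  refine ⟨fun r hr => (h0 r hr).differentiableAt.differentiableWithinAt, by simp, ?_⟩
  rw [zero_add] at c1
  exact c1.congr fun r hr => (h0 r hr).deriv

/-- Conversely, a mild solution gives a classical one, extended to a `C²` function on `(0,∞)` by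
the right side of the integral equation. -/
lemma IsMild.exists_isClassical {β : ℝ} {v : ℝ → ℝ} (h : IsMild β v) :
    ∃ y, IsClassical β y ∧ ∀ r, 5 / 2 ≤ r → y r = v r * rexp (-r) / r := by
  have hq : Continuous fun s => v s ^ 3 := h.cont.pow 3
  have hqC := h.cube_abs_le
  set w : ℝ → ℝ := fun r => β - greenOp (fun s => v s ^ 3) r with hw
  set w1 : ℝ → ℝ := fun r => rexp (2 * r) * tailInt 4 (fun s => v s ^ 3) r with hw1
  have hwv : ∀ r, 5 / 2 ≤ r → w r = v r := fun r hr => by rw [h.eq r, max_eq_left hr]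
  have d0 : ∀ r ∈ Ioi (0:ℝ), HasDerivAt w (w1 r) r := fun r hr =>
    ((greenOp_hasDerivAt hq hqC hr).const_sub β).congr_deriv (by simp [hw1])
  have d1 : ∀ r ∈ Ioi (0:ℝ), HasDerivAt w1 (2 * w1 r - rexp (-2 * r) / r ^ 2 * v r ^ 3) r :=
    fun r hr => exp_tailInt_hasDerivAt hq hqC hr
  have hpow : ∀ r ∈ Ioi (0:ℝ), r ≠ 0 := fun r hr => ne_of_gt hr
  set y : ℝ → ℝ := fun r => w r * rexp (-r) / r with hy
  set y1 : ℝ → ℝ := fun r => rexp (-r) * (w1 r / r - w r / r - w r / r ^ 2) with hy1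
  set y2 : ℝ → ℝ := fun r => rexp (-r) *
    (w r / r + 2 * w r / r ^ 2 + 2 * w r / r ^ 3 - 2 * w1 r / r ^ 2
      - rexp (-2 * r) / r ^ 3 * v r ^ 3) with hy2
  have de : ∀ r : ℝ, HasDerivAt (fun r : ℝ => rexp (-r)) (-rexp (-r)) r := fun r => by
    simpa using (hasDerivAt_neg r).exp
  have e0 : ∀ r ∈ Ioi (0:ℝ), HasDerivAt y (y1 r) r := fun r hr => by
    have hr0 := hpow r hr
    refine (((d0 r hr).mul (de r)).div (hasDerivAt_id r) hr0).congr_deriv ?_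
    simp only [id, hy1, Pi.mul_apply]
    field_simp
    ring
  have e1 : ∀ r ∈ Ioi (0:ℝ), HasDerivAt y1 (y2 r) r := fun r hr => by
    have hr0 := hpow r hr
    have hi := hasDerivAt_id r
    refine ((de r).mul ((((d1 r hr).div hi hr0).sub ((d0 r hr).div hi hr0)).sub
      ((d0 r hr).div (hasDerivAt_pow 2 r) (pow_ne_zero 2 hr0)))).congr_deriv ?_
    simp only [id, hy2, Pi.sub_apply, Pi.div_apply]
    field_simp
    push_cast
    ring
  have hyv : ∀ r, 5 / 2 ≤ r → y r = v r * rexp (-r) / r := fun r hr => by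
    simp only [hy, hwv r hr]
  refine ⟨y, ⟨?_, ?_, ?_, ?_⟩, hyv⟩
  · refine (contDiffOn_two isOpen_Ioi e0 e1 ?_).mono
      (fun r (hr : 5 / 2 ≤ r) => show (0:ℝ) < r by linarith)
    have c0 : ContinuousOn w (Ioi 0) := fun r hr => (d0 r hr).continuousAt.continuousWithinAt
    have c1 : ContinuousOn w1 (Ioi 0) := fun r hr => (d1 r hr).continuousAt.continuousWithinAt
    have cv := h.cont.continuousOn (s := Ioi 0)
    have hp2 : ∀ r ∈ Ioi (0:ℝ), r ^ 2 ≠ 0 := fun r hr => pow_ne_zero 2 (hpow r hr)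
    have hp3 : ∀ r ∈ Ioi (0:ℝ), r ^ 3 ≠ 0 := fun r hr => pow_ne_zero 3 (hpow r hr)
    rw [hy2]
    fun_prop (disch := assumption)
  · intro r hr
    have hr' : 5 / 2 ≤ r := hr
    rw [hyv r hr']
    exact div_pos (mul_pos (h.pos r) (Real.exp_pos _)) (by linarith)
  · intro r hr
    have hr0 : (0:ℝ) < r := by linarith
    have a1 : deriv y r = y1 r := (e0 r hr0).deriv
    have a2 : deriv (deriv y) r = y2 r := by
      have : deriv y =ᶠ[nhds r] y1 := by
        filter_upwards [Ioi_mem_nhds hr0] with s hs using (e0 s hs).deriv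
      rw [this.deriv_eq]
      exact (e1 r hr0).deriv
    rw [a1, a2]
    have e : rexp (-2 * r) = rexp (-r) ^ 2 := by
      rw [← Real.exp_nat_mul]; congr 1; push_cast; ring
    simp only [hy, hy1, hy2, ← hwv r hr.le, e]
    field_simp
    ring
  · have : Tendsto w atTop (nhds β) := by
      simpa using (greenOp_tendsto hq hqC).const_sub β
    refine this.congr' ?_
    filter_upwards [Ioi_mem_atTop (0:ℝ)] with r hr
    have hr0 := hpow r hr
    have := (Real.exp_pos r).ne'
    simp only [hy, Real.exp_neg]
    field_simp

/-- For every `β ∈ (0,3]` there is a unique positive `C²` solution `y` on `[5/2,∞)` of the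
ground state equation with `r e^{r} y(r) → β`, and it satisfies
`|y(r) / y₃(r;β) - 1| < 3.2·10⁻⁶` for `r ≥ 5/2`, where `y₃(r;β) = β e^{-r}/r + β³ g(r)`. -/
theorem exists_unique_decaying_solution (β : ℝ) (hβ : β ∈ Set.Ioc (0:ℝ) 3) :
    ∃ y : ℝ → ℝ,
      (ContDiffOn ℝ 2 y (Set.Ici (5 / 2)) ∧
        (∀ r ∈ Set.Ici ((5:ℝ) / 2), 0 < y r) ∧
        (∀ r > (5:ℝ) / 2,
          -(deriv (deriv y) r) - (2 / r) * deriv y r + y r - (y r) ^ 3 = 0) ∧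
        Filter.Tendsto (fun r => r * Real.exp r * y r) Filter.atTop (nhds β)) ∧
      (∀ r ∈ Set.Ici ((5:ℝ) / 2),
        |y r / (β * Real.exp (-r) / r + β ^ 3 * gfun r) - 1| < 3.2e-6) ∧
      (∀ y' : ℝ → ℝ,
        (ContDiffOn ℝ 2 y' (Set.Ici (5 / 2)) ∧
          (∀ r ∈ Set.Ici ((5:ℝ) / 2), 0 < y' r) ∧
          (∀ r > (5:ℝ) / 2,
            -(deriv (deriv y') r) - (2 / r) * deriv y' r + y' r - (y' r) ^ 3 = 0) ∧
          Filter.Tendsto (fun r => r * Real.exp r * y' r) Filter.atTop (nhds β)) →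
        Set.EqOn y' y (Set.Ici (5 / 2))) := by

  obtain ⟨hβ0, hβ3⟩ := hβ
  obtain ⟨v, hv⟩ := exists_isMild hβ0 hβ3
  obtain ⟨y, hy, hyv⟩ := hv.exists_isClassical
  refine ⟨y, hy, fun r hr => ?_, fun z hz r hr => ?_⟩
  · have hr' : 5 / 2 ≤ r := hr
    have hr0 : 0 < r := by linarith
    obtain ⟨h1, h2⟩ := hv.approx hβ0 hβ3 hr'
    set w := β - β ^ 3 * greenOp (fun _ => 1) r with hw
    have hw0 : 0 < w := lt_of_lt_of_le (by positivity) h1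
    have hden : β * Real.exp (-r) / r + β ^ 3 * gfun r = w * rexp (-r) / r := by
      rw [hw, greenOp_one hr0, Real.exp_neg]
      have := (Real.exp_pos r).ne'
      field_simp
      ring
    have hE := Real.exp_pos (-r)
    have hquot : y r / (β * Real.exp (-r) / r + β ^ 3 * gfun r) - 1 = (v r - w) / w := by
      rw [hden, hyv r hr']
      field_simp
    rw [hquot, abs_div, abs_of_pos hw0, div_lt_iff₀ hw0]
    calc |v r - w| ≤ β * 1.5e-6 := h2
      _ < 3.2e-6 * (0.99 * β) := by linarith
      _ ≤ 3.2e-6 * w := by gcongr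
  · have hr' : 5 / 2 ≤ r := hr
    have hr0 : 0 < r := by linarith
    have huniq := congrFun ((IsClassical.isMild hz).unique hβ0 hβ3
      (IsClassical.isMild hy)) r
    simp only [max_eq_left hr'] at huniq
    exact mul_left_cancel₀ (mul_pos hr0 (Real.exp_pos r)).ne' huniq
end

section
/- Let λ ∈ [0,1) and σ := √(1−λ) ∈ (0,1]. Then for every r ≥ 5/2: (i) |w₂⁺(r)| < e^{−σr}/r, and (ii) the residual R₂(r) := −(w₂⁺)''(r) − (2/r)·(w₂⁺)'(r) + (1 − λ − a₀·e^{−2r}/r²)·w₂⁺(r) satisfies |R₂(r)| < (2/25)·e^{−2r}/r³. -/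
open Real Set Filter MeasureTheory

/-- `f₁(r) = σ⁻¹ (E(2r) - (1+σ) e^{2σr} E(2(1+σ)r))`. -/
noncomputable def f1 (σ r : ℝ) : ℝ :=
  σ⁻¹ * (expInt (2 * r) - (1 + σ) * Real.exp (2 * σ * r) * expInt (2 * (1 + σ) * r))

/-- The quasi-solution `w₂⁺(r) = (e^{-σr}/r)(1 + a₀ f₁(r))` with `a₀ = 1413/64`. -/
noncomputable def w2p (σ r : ℝ) : ℝ :=
  (Real.exp (-σ * r) / r) * (1 + (1413 / 64) * f1 σ r)

/-!
Write `w₂⁺ = e^{-σr}/r · (1 + a₀ f₁)`. Since `f₁'' - 2σ f₁' = -e^{-2r}/r²`, substitution gives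
exactly `R₂ = -a₀² e^{-(2+σ)r} f₁ / r³`. Both claims therefore follow from `f₁ < 0` together with an
upper bound for `-f₁`.

With `y = 2(1+σ)r`, the derivative is `f₁' = (e^{-2r}/r) (1 - y e^y E(y))`. The continued fraction
of `E` provides `e^{-y} (y+3)/(y²+4y+2) < E(y) < e^{-y}/y`. The upper bound shows `f₁' > 0`, hence
`f₁ < 0` because `f₁` vanishes at infinity. The lower bound, being monotone in `y ≥ 2r`, gives a
bound for `f₁'` independent of `σ`, which is dominated by the `r`-derivative of
`-e^{-x} (x+2)/(x(x²+6x+6))` with `x = 2r`. This comparison function comes from the limit `σ → 0`,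
where `-f₁ = (1+x)E(x) - e^{-x}`, on replacing `E(x)` by the next upper approximant
`e^{-x} (x²+5x+2)/(x(x²+6x+6))` of the continued fraction. Hence
`-f₁ < e^{-x} (x+2)/(x(x²+6x+6)) ≤ e^{-5}·7/305` for `r ≥ 5/2`, which is below `(2/25)/a₀²`.
-/

/-! ### The exponential integral -/

/-- A function on `(0, ∞)` with negative derivative and limit `0` at infinity is positive. -/
lemma pos_of_deriv_neg_of_tendsto {g g' : ℝ → ℝ}
    (hd : ∀ x, 0 < x → HasDerivAt g (g' x) x) (hneg : ∀ x, 0 < x → g' x < 0)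
    (hlim : Tendsto g atTop (nhds 0)) {x : ℝ} (hx : 0 < x) : 0 < g x := by
  have hanti : StrictAntiOn g (Set.Ioi 0) := by
    apply strictAntiOn_of_deriv_neg (convex_Ioi 0)
    · intro y hy
      exact (hd y hy).continuousAt.continuousWithinAt
    · intro y hy
      rw [interior_Ioi] at hy
      rw [(hd y hy).deriv]
      exact hneg y hy
  have h1 : g (x + 1) < g x :=
    hanti (Set.mem_Ioi.2 hx) (Set.mem_Ioi.2 (by linarith)) (by linarith)
  have h2 : 0 ≤ g (x + 1) := by
    apply le_of_tendsto hlim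
    filter_upwards [eventually_ge_atTop (x + 1)] with y hy
    exact hanti.antitoneOn (Set.mem_Ioi.2 (by linarith)) (Set.mem_Ioi.2 (by linarith)) hy
  linarith

lemma integrableOn_expInt {a : ℝ} (ha : 0 < a) :
    IntegrableOn (fun t => Real.exp (-t) / t) (Set.Ioi a) := by
  have h1 : IntegrableOn (fun t => Real.exp (-t) / a) (Set.Ioi a) :=
    (integrableOn_exp_neg_Ioi a).div_const a
  apply Integrable.mono' h1
  · exact (by fun_prop : Measurable fun t : ℝ => Real.exp (-t) / t).aestronglyMeasurable
  · filter_upwards [ae_restrict_mem measurableSet_Ioi] with t ht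
    have ht' : a < t := ht
    have : 0 < t := ha.trans ht'
    rw [Real.norm_of_nonneg (by positivity)]
    gcongr

lemma expInt_nonneg {x : ℝ} (hx : 0 < x) : 0 ≤ expInt x := by
  apply setIntegral_nonneg measurableSet_Ioi
  intro t ht
  have : 0 < t := hx.trans ht
  positivity

lemma expInt_le {x : ℝ} (hx : 0 < x) : expInt x ≤ Real.exp (-x) / x := by
  have h1 : IntegrableOn (fun t => Real.exp (-t) / x) (Set.Ioi x) :=
    (integrableOn_exp_neg_Ioi x).div_const x
  have h2 : expInt x ≤ ∫ t in Set.Ioi x, Real.exp (-t) / x := by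
    apply setIntegral_mono_on (integrableOn_expInt hx) h1 measurableSet_Ioi
    intro t ht
    have ht' : x < t := ht
    gcongr
  rwa [integral_div, integral_exp_neg_Ioi] at h2

lemma hasDerivAt_expInt {x : ℝ} (hx : 0 < x) :
    HasDerivAt expInt (-(Real.exp (-x) / x)) x := by
  have ha : 0 < x / 2 := by linarith
  have hcont : ContinuousAt (fun t : ℝ => Real.exp (-t) / t) x := by
    apply ContinuousAt.div (by fun_prop) (by fun_prop) hx.ne'
  have hmeas : Measurable fun t : ℝ => Real.exp (-t) / t := by fun_prop
  have hint : IntervalIntegrable (fun t : ℝ => Real.exp (-t) / t) volume (x / 2) x := by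
    rw [intervalIntegrable_iff_integrableOn_Ioc_of_le (by linarith)]
    exact (integrableOn_expInt ha).mono_set Set.Ioc_subset_Ioi_self
  have h1 := intervalIntegral.integral_hasDerivAt_right hint
    (hmeas.stronglyMeasurable.stronglyMeasurableAtFilter) hcont
  have h2 := h1.const_sub (expInt (x / 2))
  refine h2.congr_of_eventuallyEq ?_
  filter_upwards [eventually_gt_nhds (show x / 2 < x by linarith)] with y hy
  have h3 := intervalIntegral.integral_Ioi_sub_Ioi (integrableOn_expInt ha) hy.le
  unfold expInt
  linarith

lemma tendsto_exp_neg_div {c : ℝ} (hc : 0 < c) :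
    Tendsto (fun x : ℝ => Real.exp (-(c * x)) / x) atTop (nhds 0) := by
  have h1 : Tendsto (fun x : ℝ => c * x) atTop atTop := tendsto_id.const_mul_atTop hc
  have h2 : Tendsto (fun x : ℝ => Real.exp (-(c * x))) atTop (nhds 0) :=
    Real.tendsto_exp_neg_atTop_nhds_zero.comp h1
  exact h2.div_atTop tendsto_id

lemma tendsto_expInt : Tendsto expInt atTop (nhds 0) := by
  have h := tendsto_exp_neg_div one_pos
  simp only [one_mul] at h
  refine tendsto_of_tendsto_of_tendsto_of_le_of_le' tendsto_const_nhds h ?_ ?_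
  · filter_upwards [eventually_gt_atTop 0] with x hx using expInt_nonneg hx
  · filter_upwards [eventually_gt_atTop 0] with x hx using expInt_le hx

lemma hasDerivAt_exp_neg (x : ℝ) :
    HasDerivAt (fun x : ℝ => Real.exp (-x)) (-Real.exp (-x)) x := by
  simpa using (hasDerivAt_neg x).exp

lemma expInt_lt {x : ℝ} (hx : 0 < x) : expInt x < Real.exp (-x) / x := by
  have h := tendsto_exp_neg_div one_pos
  simp only [one_mul] at h
  have key := pos_of_deriv_neg_of_tendsto
    (g := fun x => Real.exp (-x) / x - expInt x) (g' := fun x => -(Real.exp (-x) / x ^ 2))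
    (fun x hx => by
      refine (((hasDerivAt_exp_neg x).div (hasDerivAt_id' x) hx.ne').sub
        (hasDerivAt_expInt hx)).congr_deriv ?_
      field_simp
      ring)
    (fun x hx => by
      have : 0 < Real.exp (-x) / x ^ 2 := by positivity
      linarith)
    (by simpa using h.sub tendsto_expInt) hx
  linarith

/-- The lower bound of `E` from an even approximant of its continued fraction. -/
lemma lt_expInt {x : ℝ} (hx : 0 < x) :
    Real.exp (-x) * ((x + 3) / (x ^ 2 + 4 * x + 2)) < expInt x := by
  have key := pos_of_deriv_neg_of_tendsto
    (g := fun x => expInt x - Real.exp (-x) * ((x + 3) / (x ^ 2 + 4 * x + 2)))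
    (g' := fun x => -(Real.exp (-x) * (4 / (x * (x ^ 2 + 4 * x + 2) ^ 2))))
    (fun x hx => by
      have hn : HasDerivAt (fun x : ℝ => x + 3) 1 x := (hasDerivAt_id' x).add_const 3
      have hp : HasDerivAt (fun x : ℝ => x ^ 2 + 4 * x + 2) (2 * x + 4) x := by
        refine ((((hasDerivAt_id' x).pow 2).add
          ((hasDerivAt_id' x).const_mul 4)).add_const 2).congr_deriv ?_
        norm_num
      have hp0 : x ^ 2 + 4 * x + 2 ≠ 0 := by positivity
      refine ((hasDerivAt_expInt hx).sub
        ((hasDerivAt_exp_neg x).mul (hn.div hp hp0))).congr_deriv ?_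
      simp only [Pi.div_apply]
      field_simp
      ring)
    (fun x hx => by
      have : 0 < Real.exp (-x) * (4 / (x * (x ^ 2 + 4 * x + 2) ^ 2)) := by positivity
      linarith)
    (by
      have h := tendsto_exp_neg_div one_pos
      simp only [one_mul] at h
      have h' : Tendsto (fun x : ℝ => Real.exp (-x) * ((x + 3) / (x ^ 2 + 4 * x + 2)))
          atTop (nhds 0) := by
        refine tendsto_of_tendsto_of_tendsto_of_le_of_le' tendsto_const_nhds h ?_ ?_
        · filter_upwards [eventually_gt_atTop 0] with x hx
          positivity
        · filter_upwards [eventually_gt_atTop 0] with x hx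
          rw [div_eq_mul_one_div (Real.exp (-x)) x]
          refine mul_le_mul_of_nonneg_left ?_ (Real.exp_pos _).le
          rw [div_le_div_iff₀ (by positivity) hx]
          nlinarith
      simpa using tendsto_expInt.sub h') hx
  linarith

/-! ### Derivative and limit of `f₁` -/

/-- The derivative of `f₁` with respect to `r`. -/
noncomputable def f1d (σ r : ℝ) : ℝ :=
  Real.exp (-2 * r) / r - 2 * (1 + σ) * Real.exp (2 * σ * r) * expInt (2 * (1 + σ) * r)

lemma hasDerivAt_exp_const_mul (c r : ℝ) :
    HasDerivAt (fun r : ℝ => Real.exp (c * r)) (c * Real.exp (c * r)) r := by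
  refine ((hasDerivAt_id' r).const_mul c).exp.congr_deriv ?_
  ring

lemma hasDerivAt_expInt_const_mul {c r : ℝ} (hc : 0 < c) (hr : 0 < r) :
    HasDerivAt (fun r : ℝ => expInt (c * r)) (-(Real.exp (-(c * r)) / r)) r := by
  have h := (hasDerivAt_expInt (mul_pos hc hr)).comp r ((hasDerivAt_id' r).const_mul c)
  refine h.congr_deriv ?_
  field_simp

lemma exp_mul_exp_aux (σ r : ℝ) :
    Real.exp (-(2 * (1 + σ) * r)) = Real.exp (-2 * r) / Real.exp (2 * σ * r) := by
  rw [← Real.exp_sub]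
  congr 1
  ring

lemma hasDerivAt_f1 {σ r : ℝ} (hσ : 0 < σ) (hr : 0 < r) :
    HasDerivAt (f1 σ) (f1d σ r) r := by
  have h1 := hasDerivAt_expInt_const_mul two_pos hr
  have h2 := hasDerivAt_expInt_const_mul (c := 2 * (1 + σ)) (by positivity) hr
  have h3 := (hasDerivAt_exp_const_mul (2 * σ) r).const_mul (1 + σ)
  refine ((h1.sub (h3.mul h2)).const_mul σ⁻¹).congr_deriv ?_
  unfold f1d
  rw [exp_mul_exp_aux, show -(2 * r) = -2 * r by ring]
  field_simp
  ring

/-- The equation `f₁'' = 2σ f₁' - e^{-2r}/r²`. -/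
lemma hasDerivAt_f1d {σ r : ℝ} (hσ : 0 < σ) (hr : 0 < r) :
    HasDerivAt (f1d σ) (2 * σ * f1d σ r - Real.exp (-2 * r) / r ^ 2) r := by
  have h1 := (hasDerivAt_exp_const_mul (-2) r).div (hasDerivAt_id' r) hr.ne'
  have h2 := hasDerivAt_expInt_const_mul (c := 2 * (1 + σ)) (by positivity) hr
  have h3 := (hasDerivAt_exp_const_mul (2 * σ) r).const_mul (2 * (1 + σ))
  refine (h1.sub (h3.mul h2)).congr_deriv ?_
  unfold f1d
  rw [exp_mul_exp_aux]
  field_simp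
  ring

lemma tendsto_f1 {σ : ℝ} (hσ : 0 < σ) : Tendsto (f1 σ) atTop (nhds 0) := by
  have h1 : Tendsto (fun r : ℝ => expInt (2 * r)) atTop (nhds 0) :=
    tendsto_expInt.comp (tendsto_id.const_mul_atTop two_pos)
  have h2 : Tendsto (fun r : ℝ => (1 + σ) * Real.exp (2 * σ * r) * expInt (2 * (1 + σ) * r))
      atTop (nhds 0) := by
    refine tendsto_of_tendsto_of_tendsto_of_le_of_le' tendsto_const_nhds
      (tendsto_exp_neg_div two_pos) ?_ ?_
    · filter_upwards [eventually_gt_atTop 0] with r hr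
      have := expInt_nonneg (x := 2 * (1 + σ) * r) (by positivity)
      positivity
    · filter_upwards [eventually_gt_atTop 0] with r hr
      have h := expInt_le (x := 2 * (1 + σ) * r) (by positivity)
      rw [exp_mul_exp_aux] at h
      calc (1 + σ) * Real.exp (2 * σ * r) * expInt (2 * (1 + σ) * r)
          ≤ (1 + σ) * Real.exp (2 * σ * r) *
            (Real.exp (-2 * r) / Real.exp (2 * σ * r) / (2 * (1 + σ) * r)) := by gcongr
        _ = Real.exp (-(2 * r)) / r / 2 := by
            rw [show -(2 * r) = -2 * r by ring]
            field_simp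
        _ ≤ Real.exp (-(2 * r)) / r := half_le_self (by positivity)
  have h := (h1.sub h2).const_mul σ⁻¹
  rw [sub_zero, mul_zero] at h
  exact h

/-! ### Bounds for `f₁` -/

lemma f1d_pos {σ r : ℝ} (hσ : 0 < σ) (hr : 0 < r) : 0 < f1d σ r := by
  have h := expInt_lt (x := 2 * (1 + σ) * r) (by positivity)
  rw [exp_mul_exp_aux] at h
  have h' : 2 * (1 + σ) * Real.exp (2 * σ * r) * expInt (2 * (1 + σ) * r) <
      2 * (1 + σ) * Real.exp (2 * σ * r) *
        (Real.exp (-2 * r) / Real.exp (2 * σ * r) / (2 * (1 + σ) * r)) := by gcongr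
  have e : 2 * (1 + σ) * Real.exp (2 * σ * r) *
        (Real.exp (-2 * r) / Real.exp (2 * σ * r) / (2 * (1 + σ) * r)) =
        Real.exp (-2 * r) / r := by
    field_simp
  unfold f1d
  linarith

/-- An upper bound for `f₁'` that does not depend on `σ`. -/
lemma f1d_lt {σ r : ℝ} (hσ : 0 < σ) (hr : 0 < r) :
    f1d σ r < Real.exp (-2 * r) / r * ((2 * r + 2) / ((2 * r) ^ 2 + 4 * (2 * r) + 2)) := by
  have h := lt_expInt (x := 2 * (1 + σ) * r) (by positivity)
  rw [exp_mul_exp_aux] at h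
  set y := 2 * (1 + σ) * r with hy
  have hy0 : 0 < y := by positivity
  have hxy : 2 * r ≤ y := by rw [hy]; nlinarith [mul_pos hσ hr]
  have h' : 2 * (1 + σ) * Real.exp (2 * σ * r) *
      (Real.exp (-2 * r) / Real.exp (2 * σ * r) * ((y + 3) / (y ^ 2 + 4 * y + 2))) <
      2 * (1 + σ) * Real.exp (2 * σ * r) * expInt y := by gcongr
  have e : 2 * (1 + σ) * Real.exp (2 * σ * r) *
      (Real.exp (-2 * r) / Real.exp (2 * σ * r) * ((y + 3) / (y ^ 2 + 4 * y + 2))) =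
      Real.exp (-2 * r) / r * (1 - (y + 2) / (y ^ 2 + 4 * y + 2)) := by
    have e1 : 2 * (1 + σ) = y / r := by rw [hy]; field_simp
    rw [e1]
    field_simp
    ring
  have mono : (y + 2) / (y ^ 2 + 4 * y + 2) ≤
      (2 * r + 2) / ((2 * r) ^ 2 + 4 * (2 * r) + 2) := by
    rw [div_le_div_iff₀ (by positivity) (by positivity)]
    -- The difference of the cross products factors as follows.
    have : 0 ≤ (y - 2 * r) * (2 * r * y + 2 * (2 * r) + 2 * y + 6) :=
      mul_nonneg (by linarith) (by positivity)
    linarith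
  have m2 := mul_le_mul_of_nonneg_left mono
    (show 0 ≤ Real.exp (-2 * r) / r by positivity)
  unfold f1d
  rw [← hy]
  linarith

lemma f1_neg {σ r : ℝ} (hσ : 0 < σ) (hr : 0 < r) : f1 σ r < 0 := by
  have key := pos_of_deriv_neg_of_tendsto (g := fun r => -f1 σ r) (g' := fun r => -f1d σ r)
    (fun r hr => (hasDerivAt_f1 hσ hr).neg)
    (fun r hr => by linarith [f1d_pos hσ hr])
    (by simpa using (tendsto_f1 hσ).neg) hr
  linarith

/-- With `x = 2r`, this reads `-f₁(r) < e^{-x} (x+2)/(x(x²+6x+6))`. -/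
lemma neg_f1_lt {σ r : ℝ} (hσ : 0 < σ) (hr : 0 < r) :
    -f1 σ r < Real.exp (-2 * r) * ((r + 1) / (r * (4 * r ^ 2 + 12 * r + 6))) := by
  have key := pos_of_deriv_neg_of_tendsto
    (g := fun r => f1 σ r + Real.exp (-2 * r) * ((r + 1) / (4 * r ^ 3 + 12 * r ^ 2 + 6 * r)))
    (g' := fun r => f1d σ r + ((-2 * Real.exp (-2 * r)) *
        ((r + 1) / (4 * r ^ 3 + 12 * r ^ 2 + 6 * r)) + Real.exp (-2 * r) *
        ((1 * (4 * r ^ 3 + 12 * r ^ 2 + 6 * r) - (r + 1) * (12 * r ^ 2 + 24 * r + 6)) /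
          (4 * r ^ 3 + 12 * r ^ 2 + 6 * r) ^ 2)))
    (fun r hr => by
      have hn : HasDerivAt (fun x : ℝ => x + 1) 1 r := (hasDerivAt_id' r).add_const 1
      have hp : HasDerivAt (fun r : ℝ => 4 * r ^ 3 + 12 * r ^ 2 + 6 * r)
          (12 * r ^ 2 + 24 * r + 6) r := by
        refine (((((hasDerivAt_id' r).pow 3).const_mul 4).add
          (((hasDerivAt_id' r).pow 2).const_mul 12)).add
          ((hasDerivAt_id' r).const_mul 6)).congr_deriv ?_
        norm_num
        ring
      have hp0 : 4 * r ^ 3 + 12 * r ^ 2 + 6 * r ≠ 0 := by positivity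
      exact (hasDerivAt_f1 hσ hr).add
        ((hasDerivAt_exp_const_mul (-2) r).mul (hn.div hp hp0)))
    (fun r hr => by
      have h := f1d_lt hσ hr
      have hq : 1 / r * ((2 * r + 2) / ((2 * r) ^ 2 + 4 * (2 * r) + 2)) +
          (-2 * ((r + 1) / (4 * r ^ 3 + 12 * r ^ 2 + 6 * r)) +
          (1 * (4 * r ^ 3 + 12 * r ^ 2 + 6 * r) - (r + 1) * (12 * r ^ 2 + 24 * r + 6)) /
          (4 * r ^ 3 + 12 * r ^ 2 + 6 * r) ^ 2) ≤ 0 := by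
        have e0 : 1 / r * ((2 * r + 2) / ((2 * r) ^ 2 + 4 * (2 * r) + 2)) +
            (-2 * ((r + 1) / (4 * r ^ 3 + 12 * r ^ 2 + 6 * r)) +
            (1 * (4 * r ^ 3 + 12 * r ^ 2 + 6 * r) - (r + 1) * (12 * r ^ 2 + 24 * r + 6)) /
            (4 * r ^ 3 + 12 * r ^ 2 + 6 * r) ^ 2) =
            -((16 * r ^ 3 + 36 * r ^ 2 + 24 * r + 6) /
              (4 * r ^ 2 * (2 * r ^ 2 + 6 * r + 3) ^ 2 * (2 * r ^ 2 + 4 * r + 1))) := by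
          rw [show (2 * r) ^ 2 + 4 * (2 * r) + 2 = 2 * (2 * r ^ 2 + 4 * r + 1) by ring,
            show 4 * r ^ 3 + 12 * r ^ 2 + 6 * r = 2 * r * (2 * r ^ 2 + 6 * r + 3) by ring]
          field_simp
          ring
        rw [e0, neg_nonpos]
        positivity
      have := mul_nonpos_of_nonneg_of_nonpos (Real.exp_pos (-2 * r)).le hq
      have e : Real.exp (-2 * r) / r * ((2 * r + 2) / ((2 * r) ^ 2 + 4 * (2 * r) + 2)) =
        Real.exp (-2 * r) * (1 / r * ((2 * r + 2) / ((2 * r) ^ 2 + 4 * (2 * r) + 2))) := by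
        ring
      linarith)
    (by
      have h := tendsto_exp_neg_div two_pos
      have h' : Tendsto (fun r : ℝ => Real.exp (-2 * r) *
          ((r + 1) / (4 * r ^ 3 + 12 * r ^ 2 + 6 * r))) atTop (nhds 0) := by
        refine tendsto_of_tendsto_of_tendsto_of_le_of_le' tendsto_const_nhds h ?_ ?_
        · filter_upwards [eventually_gt_atTop 0] with x hx
          positivity
        · filter_upwards [eventually_gt_atTop 0] with x hx
          rw [div_eq_mul_one_div (Real.exp (-(2 * x))) x, show -(2 * x) = -2 * x by ring]
          refine mul_le_mul_of_nonneg_left ?_ (Real.exp_pos _).le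
          rw [div_le_div_iff₀ (by positivity) hx]
          nlinarith [pow_pos hx 3, pow_pos hx 2]
      simpa using (tendsto_f1 hσ).add h') hr
  have e : r * (4 * r ^ 2 + 12 * r + 6) = 4 * r ^ 3 + 12 * r ^ 2 + 6 * r := by ring
  rw [e]
  linarith

/-- The bound `-f₁ < (2/25)/a₀²` on `[5/2, ∞)`. -/
lemma neg_f1_lt_const {σ r : ℝ} (hσ : 0 < σ) (hr : 5 / 2 ≤ r) :
    (1413 / 64) ^ 2 * -f1 σ r < 2 / 25 := by
  have hr0 : 0 < r := by linarith
  have h := neg_f1_lt hσ hr0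
  -- The left side decreases in `r` and equals `7 / 305` at `r = 5 / 2`.
  have h1 : (r + 1) / (r * (4 * r ^ 2 + 12 * r + 6)) ≤ 7 / 305 := by
    rw [div_le_div_iff₀ (by positivity) (by positivity)]
    nlinarith [mul_nonneg hr0.le (sub_nonneg.2 hr), pow_pos hr0 2,
      mul_nonneg (pow_pos hr0 2).le (sub_nonneg.2 hr)]
  have h2 : Real.exp (-2 * r) ≤ 1 / 143 := by
    have h3 : Real.exp (-2 * r) ≤ Real.exp (-5) := Real.exp_le_exp.2 (by linarith)
    have h4 : (143 : ℝ) ≤ Real.exp 5 := by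
      have h5 : Real.exp 5 = Real.exp 1 ^ 5 := by
        rw [← Real.exp_nat_mul]
        norm_num
      have h6 : (2.7 : ℝ) ≤ Real.exp 1 := by linarith [Real.exp_one_gt_d9]
      calc (143 : ℝ) ≤ 2.7 ^ 5 := by norm_num
        _ ≤ Real.exp 1 ^ 5 := by gcongr
        _ = Real.exp 5 := h5.symm
    rw [Real.exp_neg, inv_eq_one_div] at h3
    exact h3.trans (one_div_le_one_div_of_le (by norm_num) h4)
  have h3 : Real.exp (-2 * r) * ((r + 1) / (r * (4 * r ^ 2 + 12 * r + 6))) ≤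
      1 / 143 * (7 / 305) := by gcongr
  have : (1413 / 64 : ℝ) ^ 2 * (1 / 143 * (7 / 305)) < 2 / 25 := by norm_num
  nlinarith

/-! ### The quasi-solution and its residual -/

lemma hasDerivAt_w2p {σ r : ℝ} (hσ : 0 < σ) (hr : 0 < r) :
    HasDerivAt (w2p σ) ((Real.exp (-σ * r) / r) *
      ((1413 / 64) * f1d σ r - (σ + 1 / r) * (1 + (1413 / 64) * f1 σ r))) r := by
  have h1 := (hasDerivAt_exp_const_mul (-σ) r).div (hasDerivAt_id' r) hr.ne'
  have h2 := ((hasDerivAt_f1 hσ hr).const_mul (1413 / 64)).const_add 1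
  refine (h1.mul h2).congr_deriv ?_
  simp only [Pi.div_apply]
  field_simp
  ring

lemma deriv_deriv_w2p {σ r : ℝ} (hσ : 0 < σ) (hr : 0 < r) :
    deriv (deriv (w2p σ)) r = (Real.exp (-σ * r) / r) *
      ((1413 / 64) * (2 * σ * f1d σ r - Real.exp (-2 * r) / r ^ 2)
        - 2 * (σ + 1 / r) * ((1413 / 64) * f1d σ r)
        + (σ ^ 2 + 2 * σ / r + 2 / r ^ 2) * (1 + (1413 / 64) * f1 σ r)) := by
  have hev : deriv (w2p σ) =ᶠ[nhds r] fun r => (Real.exp (-σ * r) / r) *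
      ((1413 / 64) * f1d σ r - (σ + r⁻¹) * (1 + (1413 / 64) * f1 σ r)) := by
    filter_upwards [eventually_gt_nhds hr] with y hy
    rw [(hasDerivAt_w2p hσ hy).deriv, one_div]
  rw [hev.deriv_eq]
  have h1 := (hasDerivAt_exp_const_mul (-σ) r).div (hasDerivAt_id' r) hr.ne'
  have h2 := ((hasDerivAt_f1 hσ hr).const_mul (1413 / 64)).const_add 1
  have h3 := (hasDerivAt_f1d hσ hr).const_mul (1413 / 64)
  have h4 := (hasDerivAt_inv hr.ne').const_add σ
  refine ((h1.mul (h3.sub (h4.mul h2))).congr_deriv ?_).deriv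
  simp only [Pi.div_apply, Pi.mul_apply, Pi.sub_apply]
  field_simp
  ring

/-- The exact value of the residual, `R₂ = -a₀² e^{-(2+σ)r} f₁ / r³`. -/
lemma residual_eq {σ r : ℝ} (hσ : 0 < σ) (hr : 0 < r) :
    -(deriv (deriv (w2p σ)) r) - (2 / r) * deriv (w2p σ) r
        + (σ ^ 2 - (1413 / 64) * Real.exp (-2 * r) / r ^ 2) * w2p σ r =
      (Real.exp (-2 * r) / r ^ 3) * (Real.exp (-σ * r) * ((1413 / 64) ^ 2 * -f1 σ r)) := by
  rw [deriv_deriv_w2p hσ hr, (hasDerivAt_w2p hσ hr).deriv]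
  unfold w2p
  field_simp
  ring

/-- For `λ ∈ [0,1)`, `σ = √(1-λ)`: on `[5/2,∞)` the quasi-solution `w₂⁺` satisfies
`|w₂⁺(r)| < e^{-σr}/r` and its residual in the approximate `L₊` equation satisfies
`|R₂(r)| < (2/25) e^{-2r}/r³`. -/
theorem w2p_bound_and_residual
    (lam : ℝ) (hlam : lam ∈ Set.Ico (0:ℝ) 1)
    (σ : ℝ) (hσ : σ = Real.sqrt (1 - lam))
    (r : ℝ) (hr : 5 / 2 ≤ r) :
    |w2p σ r| < Real.exp (-σ * r) / r ∧
    |(-(deriv (deriv (w2p σ)) r) - (2 / r) * deriv (w2p σ) r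
        + (1 - lam - (1413 / 64) * Real.exp (-2 * r) / r ^ 2) * w2p σ r)| <
      (2 / 25) * Real.exp (-2 * r) / r ^ 3 := by
  have hr0 : 0 < r := by linarith
  have hl : 0 < 1 - lam := by linarith [hlam.2]
  have hσ0 : 0 < σ := hσ ▸ Real.sqrt_pos.2 hl
  have hsq : 1 - lam = σ ^ 2 := by rw [hσ, Real.sq_sqrt hl.le]
  have hneg := f1_neg hσ0 hr0
  have hlt := neg_f1_lt_const hσ0 hr
  constructor
  · have hpos : 0 < Real.exp (-σ * r) / r := by positivity
    unfold w2p
    rw [abs_mul, abs_of_pos hpos]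
    apply mul_lt_of_lt_one_right hpos
    rw [abs_lt]
    constructor <;> linarith
  · rw [hsq, residual_eq hσ0 hr0]
    have hA : 0 < (1413 / 64) ^ 2 * -f1 σ r := mul_pos (by norm_num) (by linarith)
    rw [abs_of_pos (by positivity)]
    have he : Real.exp (-σ * r) ≤ 1 := Real.exp_le_one_iff.2 (by nlinarith)
    have h1 : Real.exp (-σ * r) * ((1413 / 64) ^ 2 * -f1 σ r) < 2 / 25 :=
      (mul_le_of_le_one_left hA.le he).trans_lt hlt
    calc _ < Real.exp (-2 * r) / r ^ 3 * (2 / 25) := by gcongr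
      _ = _ := by ring
end
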